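/- For every positive integer r, ρ̄( Σ_{Π ∈ P(r)} c̄(Π) · ∏_{P ∈ Π} E(|P|; T) ) = T^r in ℝ[T]; that is, the partition sum Σ_{Π ∈ P(r)} c̄(Π) ∏_{P ∈ Π} E(|P|;T) equals ρ̄^{-1}(T^r). -/

import Mathlib

open Finset

open scoped Classical

/-- The Riemann zeta value `ζ(m) = Σ_{n ≥ 1} 1/n^m`. -/
noncomputable def zetaVal (m : ℕ) : ℝ := ∑' n : ℕ, 1 / ((n : ℝ) + 1) ^ m

/-- `E(k;T) ∈ ℝ[T]`: the constant polynomial `ζ(k)` if `k ≥ 2`, the variable `T` if `k = 1`. -/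
noncomputable def Epoly (k : ℕ) : Polynomial ℝ :=
  if k = 1 then Polynomial.X else Polynomial.C (zetaVal k)

/-- The set of partitions of a finite set `S`: sets of nonempty pairwise disjoint
subsets (blocks) of `S` whose union is `S`. -/
noncomputable def partitionsOf {α : Type*} [DecidableEq α] (S : Finset α) :
    Finset (Finset (Finset α)) :=
  S.powerset.powerset.filter (fun π =>
    (∀ P ∈ π, P.Nonempty) ∧
    (∀ P ∈ π, ∀ Q ∈ π, P ≠ Q → Disjoint P Q) ∧
    π.biUnion id = S)

/-- `c̄(Π) = ∏_{P ∈ Π} (|P| - 1)!`. -/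
def cbar {α : Type*} (π : Finset (Finset α)) : ℕ :=
  ∏ P ∈ π, (P.card - 1).factorial

/-- `ρ̄(T^s) = s! Σ (∏_{m=2}^s (−ζ(m)/m)^{i_m}/i_m!) T^j/j!`, the sum over tuples
`(j, i_2, …, i_s)` of nonnegative integers with `j + Σ_{m=2}^s m·i_m = s`.
Tuples are encoded as pairs `(j, i)` with `i : Fin (s+1) → ℕ` supported on indices
`m ≥ 2` (the values `i 0`, `i 1` are forced to be `0`); the bound `i m ≤ s` is
automatic, so ranging over `{0,…,s}` captures all tuples. -/
noncomputable def rhoX (s : ℕ) : Polynomial ℝ :=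
  (s.factorial : Polynomial ℝ) *
    ∑ j ∈ Finset.range (s + 1),
      ∑ i ∈ (Fintype.piFinset fun _ : Fin (s + 1) => Finset.range (s + 1)).filter
          (fun i => (∀ m : Fin (s + 1), m.1 < 2 → i m = 0) ∧
            j + ∑ m : Fin (s + 1), m.1 * i m = s),
        (∏ m : Fin (s + 1),
            Polynomial.C ((-(zetaVal m.1) / (m.1 : ℝ)) ^ i m / ((i m).factorial : ℝ))) *
          (Polynomial.X ^ j * Polynomial.C ((j.factorial : ℝ)⁻¹))

/-- The `ℝ`-linear endomorphism `ρ̄` of `ℝ[T]`, defined on monomials by `T^s ↦ ρ̄(T^s)`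
and extended by linearity. -/
noncomputable def rho (p : Polynomial ℝ) : Polynomial ℝ :=
  ∑ s ∈ p.support, Polynomial.C (p.coeff s) * rhoX s

/-!
Write `L = ∑_{m ≥ 2} ζ(m) t^m / m`. Since `(k - 1)! E(k; T)` is `k!` times the coefficient of `t^k`
in `T t + L`, the exponential formula identifies the partition sum with `r!` times the coefficient
of `t^r` in `exp(T t + L) = exp(L) e^{Tt}`. Applying `ρ̄` coefficientwise replaces `e^{Tt}` by
`exp(-L) e^{Tt}` and commutes with multiplication by `exp(L)`, so the result is `e^{Tt}`, whose
coefficient is `T^r / r!`.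
-/

section ExpSubst

open PowerSeries

variable {R : Type*} [CommRing R]

theorem constantCoeff_monomial_of_ne_zero {d : ℕ} (hd : d ≠ 0) (c : R) :
    constantCoeff (monomial d c) = 0 := by
  rw [← coeff_zero_eq_constantCoeff_apply, coeff_monomial, if_neg hd.symm]

theorem constantCoeff_map_eq_zero {R' : Type*} [CommRing R'] (f : R →+* R') {L : R⟦X⟧}
    (hL : constantCoeff L = 0) : constantCoeff (PowerSeries.map f L) = 0 := by
  rw [← coeff_zero_eq_constantCoeff_apply] at hL ⊢
  rw [coeff_map, hL, map_zero]

theorem coeff_eq_of_derivative_eq_mul [IsAddTorsionFree R] {F H G K : R⟦X⟧} {s : ℕ}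
    (hF : d⁄dX R F = G * F) (hH : d⁄dX R H = K * H)
    (h0 : constantCoeff F = constantCoeff H)
    (hGK : ∀ k < s, coeff k G = coeff k K) : ∀ n ≤ s, coeff n F = coeff n H := by
  intro n
  induction n using Nat.strong_induction_on with
  | _ n ih =>
    intro hn
    obtain _ | n := n
    · simpa using h0
    have hsucc : coeff (n + 1) F * ((n : R) + 1) = coeff (n + 1) H * ((n : R) + 1) := by
      rw [← coeff_derivative, ← coeff_derivative, hF, hH, coeff_mul, coeff_mul]
      refine sum_congr rfl fun ij hij => ?_
      have := mem_antidiagonal.mp hij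
      rw [hGK ij.1 (by omega), ih ij.2 (by omega) (by omega)]
    refine nsmul_right_injective n.succ_ne_zero ?_
    simpa [nsmul_eq_mul, mul_comm] using hsucc

variable [Algebra ℚ R]

theorem derivative_exp_subst {L : R⟦X⟧} (hL : constantCoeff L = 0) :
    d⁄dX R ((exp R).subst L) = d⁄dX R L * (exp R).subst L := by
  rw [derivative_subst (.of_constantCoeff_zero' hL), derivative_exp, mul_comm]

theorem constantCoeff_exp_subst {L : R⟦X⟧} (hL : constantCoeff L = 0) :
    constantCoeff ((exp R).subst L) = 1 := by
  have hsub : constantCoeff ((exp R - 1).subst L) = 0 :=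
    constantCoeff_subst_eq_zero hL _ (by simp)
  have hL' : HasSubst L := .of_constantCoeff_zero' hL
  rw [← coe_substAlgHom hL', map_sub, map_one, coe_substAlgHom, map_sub, map_one] at hsub
  exact sub_eq_zero.mp hsub

theorem coeff_exp_subst_congr {L M : R⟦X⟧} (hL : constantCoeff L = 0) (hM : constantCoeff M = 0)
    {n : ℕ} (hLM : ∀ k ≤ n, coeff k L = coeff k M) :
    coeff n ((exp R).subst L) = coeff n ((exp R).subst M) := by
  have : IsAddTorsionFree R := .of_module_rat R
  refine coeff_eq_of_derivative_eq_mul (derivative_exp_subst hL) (derivative_exp_subst hM)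
    (by rw [constantCoeff_exp_subst hL, constantCoeff_exp_subst hM]) (fun k hk => ?_) n le_rfl
  rw [coeff_derivative, coeff_derivative, hLM _ hk]

theorem exp_subst_add {L M : R⟦X⟧} (hL : constantCoeff L = 0) (hM : constantCoeff M = 0) :
    (exp R).subst (L + M) = (exp R).subst L * (exp R).subst M := by
  have : IsAddTorsionFree R := .of_module_rat R
  have hLM : constantCoeff (L + M) = 0 := by rw [map_add, hL, hM, add_zero]
  have hprod : d⁄dX R ((exp R).subst L * (exp R).subst M) =
      d⁄dX R (L + M) * ((exp R).subst L * (exp R).subst M) := by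
    rw [Derivation.leibniz, smul_eq_mul, smul_eq_mul, derivative_exp_subst hL,
      derivative_exp_subst hM, map_add]
    ring
  ext n
  refine coeff_eq_of_derivative_eq_mul (derivative_exp_subst hLM) hprod ?_ (fun _ _ => rfl) n le_rfl
  rw [map_mul, constantCoeff_exp_subst hL, constantCoeff_exp_subst hM,
    constantCoeff_exp_subst hLM, one_mul]

theorem exp_subst_zero : (exp R).subst (0 : R⟦X⟧) = 1 := by
  rw [subst_zero_eq_C_constantCoeff]; simp

theorem exp_subst_mul_exp_subst_neg {L : R⟦X⟧} (hL : constantCoeff L = 0) :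
    (exp R).subst L * (exp R).subst (-L) = 1 := by
  rw [← exp_subst_add hL (by rw [map_neg, hL, neg_zero]), add_neg_cancel, exp_subst_zero]

theorem exp_subst_sum {ι : Type*} (S : Finset ι) {L : ι → R⟦X⟧}
    (hL : ∀ i ∈ S, constantCoeff (L i) = 0) :
    (exp R).subst (∑ i ∈ S, L i) = ∏ i ∈ S, (exp R).subst (L i) := by
  induction S using Finset.induction_on with
  | empty => exact exp_subst_zero
  | insert i S hi ih =>
    have hS : ∀ j ∈ S, constantCoeff (L j) = 0 := fun j hj => hL j (mem_insert_of_mem hj)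
    rw [sum_insert hi, prod_insert hi, exp_subst_add (hL i (mem_insert_self i S)), ih hS]
    rw [map_sum, sum_eq_zero hS]

theorem coeff_exp_subst_monomial {d : ℕ} (hd : d ≠ 0) (c : R) (n : ℕ) :
    coeff n ((exp R).subst (monomial d c)) =
      if d ∣ n then c ^ (n / d) * coeff (n / d) (exp R) else 0 := by
  have hmono : (monomial d c : R⟦X⟧) = (c • (X : R⟦X⟧)).subst ((X : R⟦X⟧) ^ d) := by
    rw [subst_smul (.X_pow hd), subst_X (.X_pow hd), X_pow_eq, ← map_smul, smul_eq_mul, mul_one]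
  rw [hmono, ← subst_comp_subst_apply (.smul_X' c) (.X_pow hd), ← rescale_eq_subst,
    coeff_subst_X_pow hd, coeff_rescale, Algebra.algebraMap_self_apply]

theorem exp_subst_monomial_one (a : R) : (exp R).subst (monomial 1 a) = rescale a (exp R) := by
  ext n
  rw [coeff_exp_subst_monomial one_ne_zero, if_pos (one_dvd n), Nat.div_one, coeff_rescale]

theorem sum_finsuppAntidiag_eq_sum_of_dvd {ι M : Type*} [Fintype ι] [DecidableEq ι]
    [AddCommMonoid M] (S : Finset ι) {d : ι → ℕ} (hd : ∀ i ∈ S, d i ≠ 0) {n N : ℕ} (hnN : n ≤ N)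
    (g : (ι →₀ ℕ) → M) (hg : ∀ l, (∃ i ∈ S, ¬ d i ∣ l i) → g l = 0) :
    ∑ l ∈ finsuppAntidiag S n, g l =
      ∑ k ∈ Fintype.piFinset fun _ : ι => range (N + 1) with
          (∀ i ∉ S, k i = 0) ∧ ∑ i, d i * k i = n,
        g (Finsupp.equivFunOnFinite.symm fun i => d i * k i) := by
  symm
  refine sum_of_injOn (fun k => Finsupp.equivFunOnFinite.symm fun i => d i * k i)
    (fun k hk l hl hkl => ?_) (fun k hk => ?_) (fun l hl hl_notMem => hg l ?_) fun _ _ => rfl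
  · funext i
    have hi : d i * k i = d i * l i := DFunLike.congr_fun hkl i
    by_cases hiS : i ∈ S
    · exact Nat.eq_of_mul_eq_mul_left (Nat.pos_of_ne_zero (hd i hiS)) hi
    · rw [(mem_filter.mp hk).2.1 i hiS, (mem_filter.mp hl).2.1 i hiS]
  · obtain ⟨-, hkS, hsum⟩ := mem_filter.mp hk
    refine mem_finsuppAntidiag.mpr ⟨?_, fun i hi => by_contra fun hiS => ?_⟩
    · rw [← hsum]
      exact sum_subset (subset_univ S) fun i _ hiS => by simp [hkS i hiS]
    · simp [hkS i hiS] at hi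
  · by_contra! hdvd
    obtain ⟨hsum, hsupp⟩ := mem_finsuppAntidiag.mp hl
    have hlS : ∀ i ∉ S, l i = 0 := fun i hiS => Finsupp.notMem_support_iff.mp fun h => hiS (hsupp h)
    have hmul : ∀ i, d i * (l i / d i) = l i := fun i => by
      by_cases hiS : i ∈ S
      · exact Nat.mul_div_cancel' (hdvd i hiS)
      · simp [hlS i hiS]
    have hle : ∀ i, l i ≤ n := fun i => by
      by_cases hiS : i ∈ S
      · exact hsum ▸ single_le_sum_of_canonicallyOrdered hiS
      · simp [hlS i hiS]
    refine hl_notMem ⟨fun i => l i / d i, mem_filter.mpr ⟨?_, fun i hiS => ?_, ?_⟩, ?_⟩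
    · exact Fintype.mem_piFinset.mpr fun i =>
        mem_range_succ_iff.mpr ((Nat.div_le_self _ _).trans ((hle i).trans hnN))
    · simp [hlS i hiS]
    · simp only [hmul]
      rw [← hsum]
      exact (sum_subset (subset_univ S) fun i _ => hlS i).symm
    · ext i
      exact hmul i

theorem coeff_prod_exp_subst_monomial {ι : Type*} [Fintype ι] [DecidableEq ι] (S : Finset ι)
    {d : ι → ℕ} (hd : ∀ i ∈ S, d i ≠ 0) (c : ι → R) {n N : ℕ} (hnN : n ≤ N) :
    coeff n (∏ i ∈ S, (exp R).subst (monomial (d i) (c i))) =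
      ∑ k ∈ Fintype.piFinset fun _ : ι => range (N + 1) with
          (∀ i ∉ S, k i = 0) ∧ ∑ i, d i * k i = n,
        ∏ i, c i ^ k i * coeff (k i) (exp R) := by
  rw [coeff_prod, sum_finsuppAntidiag_eq_sum_of_dvd S hd hnN]
  · refine sum_congr rfl fun k hk => ?_
    have hkS := (mem_filter.mp hk).2.1
    rw [← prod_subset (subset_univ S) fun i _ hiS => by simp [hkS i hiS]]
    refine prod_congr rfl fun i hiS => ?_
    rw [coeff_exp_subst_monomial (hd i hiS), Finsupp.equivFunOnFinite_symm_apply_apply,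
      if_pos (dvd_mul_right _ _), Nat.mul_div_cancel_left _ (Nat.pos_of_ne_zero (hd i hiS))]
  · rintro l ⟨i, hiS, hdvd⟩
    exact prod_eq_zero hiS (by rw [coeff_exp_subst_monomial (hd i hiS), if_neg hdvd])

theorem coeff_exp_subst_eq_sum {L : R⟦X⟧} {p : ℕ → Prop} [DecidablePred p] (hp : p 0)
    (hL : ∀ m, p m → coeff m L = 0) {n s : ℕ} (hns : n ≤ s) :
    coeff n ((exp R).subst L) =
      ∑ i ∈ Fintype.piFinset fun _ : Fin (s + 1) => range (s + 1) with
          (∀ m : Fin (s + 1), p m → i m = 0) ∧ ∑ m : Fin (s + 1), m.1 * i m = n,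
        ∏ m : Fin (s + 1), coeff m.1 L ^ i m * coeff (i m) (exp R) := by
  let S : Finset (Fin (s + 1)) := {m | ¬ p m}
  have hS : ∀ m ∈ S, m.1 ≠ 0 := fun m hm h => (mem_filter.mp hm).2 (h ▸ hp)
  have hconst : ∀ m ∈ S, constantCoeff (monomial m.1 (coeff m.1 L)) = 0 := fun m hm =>
    constantCoeff_monomial_of_ne_zero (hS m hm) _
  have hcongr : ∀ k ≤ n, coeff k L = coeff k (∑ m ∈ S, monomial m.1 (coeff m.1 L)) := by
    intro k hk
    let j : Fin (s + 1) := ⟨k, by omega⟩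
    rw [map_sum, sum_eq_single j, coeff_monomial, if_pos rfl]
    · exact fun m _ hmj => by rw [coeff_monomial, if_neg fun h => hmj (Fin.ext h.symm)]
    · intro hj
      rw [coeff_monomial, if_pos rfl]
      exact hL k (by simpa [S, j] using hj)
  rw [coeff_exp_subst_congr (by simpa using hL 0 hp) (by rw [map_sum, sum_eq_zero hconst]) hcongr,
    exp_subst_sum S hconst, coeff_prod_exp_subst_monomial S hS _ hns]
  simp [S]

theorem factorial_succ_mul_coeff_exp_subst {W : R⟦X⟧} (hW : constantCoeff W = 0) (n : ℕ) :
    ((n + 1).factorial : R) * coeff (n + 1) ((exp R).subst W) =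
      ∑ k ∈ range (n + 1), n.choose k • (((k + 1).factorial * coeff (k + 1) W) *
        ((n - k).factorial * coeff (n - k) ((exp R).subst W))) := by
  have hderiv := congrArg (coeff n) (derivative_exp_subst hW)
  rw [coeff_derivative, coeff_mul, Nat.sum_antidiagonal_eq_sum_range_succ_mk] at hderiv
  calc ((n + 1).factorial : R) * coeff (n + 1) ((exp R).subst W)
      = n.factorial * (coeff (n + 1) ((exp R).subst W) * (n + 1)) := by
        rw [Nat.factorial_succ]; push_cast; ring
    _ = _ := by
        rw [hderiv, mul_sum]
        refine sum_congr rfl fun k hk => ?_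
        have hkn : k ≤ n := by simpa [Nat.lt_succ_iff] using hk
        rw [← Nat.choose_mul_factorial_mul_factorial hkn, coeff_derivative, Nat.factorial_succ,
          nsmul_eq_mul]
        push_cast
        ring

theorem factorial_mul_coeff_rescale_exp (a : R) (n : ℕ) :
    (n.factorial : R) * coeff n (rescale a (exp R)) = a ^ n := by
  rw [coeff_rescale, coeff_exp, mul_left_comm, ← map_natCast (algebraMap ℚ R), ← map_mul,
    mul_one_div_cancel (Nat.cast_ne_zero.mpr n.factorial_ne_zero), map_one, mul_one]

end ExpSubst

section Partitions

variable {α : Type*} [DecidableEq α] {S B P : Finset α} {π : Finset (Finset α)}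

theorem mem_partitionsOf : π ∈ partitionsOf S ↔ (∀ P ∈ π, P.Nonempty) ∧
    (∀ P ∈ π, ∀ Q ∈ π, P ≠ Q → Disjoint P Q) ∧ π.biUnion id = S := by
  refine mem_filter.trans (and_iff_right_of_imp fun h => ?_)
  simpa only [mem_powerset, subset_iff (s₁ := π)] using
    fun P hP => h.2.2 ▸ subset_biUnion_of_mem id hP

theorem subset_of_mem_partitionsOf (hπ : π ∈ partitionsOf S) (hP : P ∈ π) : P ⊆ S :=
  (mem_partitionsOf.mp hπ).2.2 ▸ subset_biUnion_of_mem id hP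

theorem partitionsOf_empty : partitionsOf (∅ : Finset α) = {∅} := by
  ext π
  refine ⟨fun hπ => mem_singleton.mpr (eq_empty_of_forall_notMem fun P hP => ?_), ?_⟩
  · obtain ⟨x, hx⟩ := (mem_partitionsOf.mp hπ).1 P hP
    exact notMem_empty x (subset_of_mem_partitionsOf hπ hP hx)
  · intro hπ
    simp [mem_singleton.mp hπ, mem_partitionsOf]

theorem notMem_of_mem_partitionsOf_sdiff (hB : B.Nonempty) (hπ : π ∈ partitionsOf (S \ B)) :
    B ∉ π := fun hBπ =>
  hB.ne_empty (disjoint_self.mp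
    (disjoint_sdiff_self_left.mono_left (subset_of_mem_partitionsOf hπ hBπ)))

theorem insert_mem_partitionsOf (hB : B.Nonempty) (hBS : B ⊆ S)
    (hπ : π ∈ partitionsOf (S \ B)) : insert B π ∈ partitionsOf S := by
  have hdisj : ∀ P ∈ π, Disjoint B P := fun P hP =>
    disjoint_sdiff.mono_right (subset_of_mem_partitionsOf hπ hP)
  obtain ⟨hne, hpair, hunion⟩ := mem_partitionsOf.mp hπ
  refine mem_partitionsOf.mpr ⟨?_, ?_, ?_⟩
  · simpa [hB] using hne
  · grind
  · rw [biUnion_insert, hunion, id, union_sdiff_of_subset hBS]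

theorem erase_mem_partitionsOf_sdiff (hπ : π ∈ partitionsOf S) (hB : B ∈ π) :
    π.erase B ∈ partitionsOf (S \ B) := by
  obtain ⟨hne, hpair, hunion⟩ := mem_partitionsOf.mp hπ
  refine mem_partitionsOf.mpr ⟨fun P hP => hne P (mem_of_mem_erase hP),
    fun P hP Q hQ => hpair P (mem_of_mem_erase hP) Q (mem_of_mem_erase hQ), ?_⟩
  have hdisj : Disjoint ((π.erase B).biUnion id) B := (disjoint_biUnion_left _ _ _).mpr
    fun P hP => hpair P (mem_of_mem_erase hP) B hB (ne_of_mem_erase hP)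
  have hS : S = (π.erase B).biUnion id ∪ B := by
    rw [← hunion, ← insert_erase hB, biUnion_insert, erase_insert (notMem_erase B π), id,
      union_comm]
  rw [hS, union_sdiff_cancel_right hdisj]

theorem sum_partitionsOf_insert {R : Type*} [CommSemiring R] (g : Finset α → R) {a : α}
    (ha : a ∉ S) :
    ∑ π ∈ partitionsOf (insert a S), ∏ P ∈ π, g P =
      ∑ U ∈ S.powerset, g (insert a U) * ∑ π ∈ partitionsOf (S \ U), ∏ P ∈ π, g P := by
  have hsdiff (U : Finset α) : insert a S \ insert a U = S \ U := by grind
  have hnotMem {x : (_ : Finset α) × Finset (Finset α)}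
      (hx : x ∈ S.powerset.sigma fun U => partitionsOf (S \ U)) : insert a x.1 ∉ x.2 :=
    notMem_of_mem_partitionsOf_sdiff (S := insert a S) (insert_nonempty a x.1)
      (by rw [hsdiff]; exact (mem_sigma.mp hx).2)
  simp_rw [mul_sum]
  rw [sum_sigma']
  symm
  refine sum_bij (fun x _ => insert (insert a x.1) x.2) ?_ ?_ ?_ ?_
  · rintro ⟨U, π⟩ hUπ
    obtain ⟨hU, hπ⟩ := mem_sigma.mp hUπ
    exact insert_mem_partitionsOf (insert_nonempty a U)
      (insert_subset_insert a (mem_powerset.mp hU)) (by rwa [hsdiff])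
  · rintro ⟨U, π⟩ hUπ ⟨V, σ⟩ hVσ heq
    have hU : U ∈ S.powerset := (mem_sigma.mp hUπ).1
    obtain ⟨hV, hσ⟩ := mem_sigma.mp hVσ
    have hblock : insert a U = insert a V :=
      (mem_insert.mp (heq ▸ mem_insert_self (insert a U) π)).resolve_right fun hUσ =>
        ha (sdiff_subset (subset_of_mem_partitionsOf hσ hUσ (mem_insert_self a U)))
    obtain rfl : U = V := by
      have haU : a ∉ U := fun h => ha (mem_powerset.mp hU h)
      have haV : a ∉ V := fun h => ha (mem_powerset.mp hV h)
      rw [← erase_insert haU, hblock, erase_insert haV]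
    obtain rfl : π = σ := by
      have hUnotMem : insert a U ∉ π := hnotMem hUπ
      have heq' : insert (insert a U) π = insert (insert a U) σ := heq
      rw [← erase_insert hUnotMem, heq', erase_insert (hnotMem hVσ)]
    rfl
  · intro π hπ
    obtain ⟨B, hB, haB⟩ : ∃ B ∈ π, a ∈ B := by
      simpa [← (mem_partitionsOf.mp hπ).2.2] using mem_insert_self a S
    refine ⟨⟨B.erase a, π.erase B⟩, mem_sigma.mpr ⟨?_, ?_⟩, ?_⟩
    · exact mem_powerset.mpr (subset_insert_iff.mp (subset_of_mem_partitionsOf hπ hB))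
    · simpa only [← hsdiff, insert_erase haB] using erase_mem_partitionsOf_sdiff hπ hB
    · simp only [insert_erase haB, insert_erase hB]
  · rintro ⟨U, π⟩ hUπ
    exact (prod_insert (hnotMem hUπ)).symm

open PowerSeries in
theorem sum_partitionsOf_prod_eq_coeff_exp_subst {R : Type*} [CommRing R] [Algebra ℚ R]
    {W : R⟦X⟧} (hW : constantCoeff W = 0) (S : Finset α) :
    ∑ π ∈ partitionsOf S, ∏ P ∈ π, ((#P).factorial : R) * coeff #P W =
      (#S).factorial * coeff #S ((exp R).subst W) := by
  induction S using Finset.strongInduction with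
  | H S ih =>
    obtain rfl | ⟨a, haS⟩ := S.eq_empty_or_nonempty
    · simp [partitionsOf_empty, constantCoeff_exp_subst hW]
    obtain ⟨S, ha, rfl⟩ : ∃ S', a ∉ S' ∧ insert a S' = S :=
      ⟨S.erase a, notMem_erase a S, insert_erase haS⟩
    rw [sum_partitionsOf_insert _ ha, card_insert_of_notMem ha,
      factorial_succ_mul_coeff_exp_subst hW]
    rw [← sum_powerset_apply_card fun k => ((k + 1).factorial * coeff (k + 1) W) *
      ((#S - k).factorial * coeff (#S - k) ((exp R).subst W))]
    refine sum_congr rfl fun U hU => ?_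
    have hUS := mem_powerset.mp hU
    rw [card_insert_of_notMem fun h => ha (hUS h),
      ih _ (sdiff_subset.trans_ssubset (ssubset_insert ha)), card_sdiff_of_subset hUS]

end Partitions

section Umbral

open PowerSeries

variable {R : Type*} [CommRing R]

theorem apply_coeff_map_C_mul (φ : Polynomial R →ₗ[R] Polynomial R) {F G : (Polynomial R)⟦X⟧}
    (hφ : ∀ n, φ (coeff n F) = coeff n G) (A : R⟦X⟧) (n : ℕ) :
    φ (coeff n (PowerSeries.map Polynomial.C A * F)) =
      coeff n (PowerSeries.map Polynomial.C A * G) := by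
  simp only [coeff_mul, coeff_map, map_sum, ← Polynomial.smul_eq_C_mul, map_smul, hφ]

variable [Algebra ℚ R]

theorem exp_subst_monomial_one_add_map_C {L : R⟦X⟧} (hL : constantCoeff L = 0) :
    (exp (Polynomial R)).subst (monomial 1 Polynomial.X + PowerSeries.map Polynomial.C L) =
      PowerSeries.map Polynomial.C ((exp R).subst L) *
        rescale Polynomial.X (exp (Polynomial R)) := by
  have hmap : PowerSeries.map Polynomial.C ((exp R).subst L) =
      (exp (Polynomial R)).subst (PowerSeries.map Polynomial.C L) := by
    rw [← map_exp Polynomial.C]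
    exact PowerSeries.map_subst (.of_constantCoeff_zero' hL) (exp R)
  rw [exp_subst_add (constantCoeff_monomial_of_ne_zero one_ne_zero _)
    (constantCoeff_map_eq_zero _ hL), exp_subst_monomial_one, hmap, mul_comm]

theorem apply_factorial_mul_coeff_exp_subst_eq_X_pow (φ : Polynomial R →ₗ[R] Polynomial R)
    {L : R⟦X⟧} (hL : constantCoeff L = 0)
    (hφ : ∀ n, φ (Polynomial.X ^ n) = n.factorial * coeff n
      (PowerSeries.map Polynomial.C ((exp R).subst (-L)) *
        rescale Polynomial.X (exp (Polynomial R)))) (n : ℕ) :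
    φ (n.factorial * coeff n ((exp (Polynomial R)).subst
      (monomial 1 Polynomial.X + PowerSeries.map Polynomial.C L))) = Polynomial.X ^ n := by
  have : IsAddTorsionFree (Polynomial R) := .of_module_rat _
  have hexp : ∀ n, φ (coeff n (rescale Polynomial.X (exp (Polynomial R)))) =
      coeff n (PowerSeries.map Polynomial.C ((exp R).subst (-L)) *
        rescale Polynomial.X (exp (Polynomial R))) := fun n => by
    refine nsmul_right_injective n.factorial_ne_zero ?_
    beta_reduce
    rw [← map_nsmul φ, nsmul_eq_mul, nsmul_eq_mul, factorial_mul_coeff_rescale_exp, hφ]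
  rw [exp_subst_monomial_one_add_map_C hL, ← nsmul_eq_mul, map_nsmul, apply_coeff_map_C_mul φ hexp,
    ← mul_assoc, ← map_mul, exp_subst_mul_exp_subst_neg hL, map_one, one_mul, nsmul_eq_mul,
    factorial_mul_coeff_rescale_exp]

end Umbral

section Rho

open PowerSeries

/-- The series `∑_{m ≥ 2} ζ(m) t^m / m`, whose negative is the exponent in
`ρ̄(e^{Tt}) = exp(-∑_{m ≥ 2} ζ(m) t^m / m) e^{Tt}`. -/
noncomputable def zetaLogSeries : ℝ⟦X⟧ :=
  PowerSeries.mk fun m => if m < 2 then 0 else zetaVal m / m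

theorem coeff_zetaLogSeries_of_lt {m : ℕ} (hm : m < 2) : coeff m zetaLogSeries = 0 := by
  rw [zetaLogSeries, coeff_mk, if_pos hm]

theorem constantCoeff_zetaLogSeries : constantCoeff zetaLogSeries = 0 :=
  coeff_zero_eq_constantCoeff_apply zetaLogSeries ▸ coeff_zetaLogSeries_of_lt two_pos

theorem coeff_zetaLogSeries_of_le {m : ℕ} (hm : 2 ≤ m) :
    coeff m zetaLogSeries = zetaVal m / m := by
  rw [zetaLogSeries, coeff_mk, if_neg hm.not_gt]

theorem coeff_exp_subst_neg_zetaLogSeries {n s : ℕ} (hns : n ≤ s) :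
    coeff n ((exp ℝ).subst (-zetaLogSeries)) =
      ∑ i ∈ Fintype.piFinset fun _ : Fin (s + 1) => range (s + 1) with
          (∀ m : Fin (s + 1), m.1 < 2 → i m = 0) ∧ ∑ m : Fin (s + 1), m.1 * i m = n,
        ∏ m : Fin (s + 1), (-zetaVal m.1 / m.1) ^ i m / (i m).factorial := by
  rw [coeff_exp_subst_eq_sum (p := (· < 2)) two_pos
    (fun m hm => by rw [map_neg, coeff_zetaLogSeries_of_lt hm, neg_zero]) hns]
  refine sum_congr rfl fun i hi => prod_congr rfl fun m _ => ?_
  obtain hm | hm := lt_or_ge m.1 2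
  · simp [(mem_filter.mp hi).2.1 m hm]
  · simp [coeff_zetaLogSeries_of_le hm, coeff_exp, div_eq_mul_inv]

theorem rhoX_eq_factorial_mul_coeff (s : ℕ) :
    rhoX s = s.factorial * coeff s
      (PowerSeries.map Polynomial.C ((exp ℝ).subst (-zetaLogSeries)) *
        rescale Polynomial.X (exp (Polynomial ℝ))) := by
  rw [rhoX, mul_comm (PowerSeries.map _ _), coeff_mul, Nat.sum_antidiagonal_eq_sum_range_succ_mk]
  congr 1
  refine sum_congr rfl fun j hj => ?_
  have hjs : j ≤ s := mem_range_succ_iff.mp hj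
  have hexp : coeff j (rescale Polynomial.X (exp (Polynomial ℝ))) =
      Polynomial.X ^ j * Polynomial.C (j.factorial : ℝ)⁻¹ := by
    simp [coeff_exp, IsScalarTower.algebraMap_apply ℚ ℝ (Polynomial ℝ), Polynomial.algebraMap_eq]
  rw [coeff_map, coeff_exp_subst_neg_zetaLogSeries (Nat.sub_le s j), hexp, map_sum, mul_sum]
  refine sum_congr (filter_congr fun i _ => ?_) fun i _ => ?_
  · exact and_congr_right' (by omega)
  · rw [map_prod, mul_comm]

/-- The endomorphism `ρ̄` as a bundled linear map, `rho` being a bare function. -/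
noncomputable def rhoLinear : Polynomial ℝ →ₗ[ℝ] Polynomial ℝ :=
  Polynomial.lsum fun s => LinearMap.toSpanSingleton ℝ (Polynomial ℝ) (rhoX s)

theorem rhoLinear_apply (p : Polynomial ℝ) : rhoLinear p = rho p := by
  simp [rhoLinear, rho, Polynomial.sum_def, Polynomial.smul_eq_C_mul]

theorem rhoLinear_X_pow (s : ℕ) : rhoLinear (Polynomial.X ^ s) = rhoX s := by
  simp [rhoLinear, Polynomial.X_pow_eq_monomial]

theorem factorial_pred_mul_Epoly {k : ℕ} (hk : k ≠ 0) :
    ((k - 1).factorial : Polynomial ℝ) * Epoly k = k.factorial * coeff k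
      (monomial 1 Polynomial.X + PowerSeries.map Polynomial.C zetaLogSeries) := by
  obtain _ | _ | k := k
  · exact absurd rfl hk
  · simp [Epoly, coeff_zetaLogSeries_of_lt]
  · rw [Epoly, if_neg (by omega), map_add, coeff_monomial, if_neg (by omega), zero_add, coeff_map,
      coeff_zetaLogSeries_of_le (by omega), ← map_natCast Polynomial.C, ← map_natCast Polynomial.C,
      ← map_mul, ← map_mul, Nat.add_sub_cancel, Nat.factorial_succ (k + 1)]
    congr 1
    push_cast
    field_simp

theorem rho_partition_sum_general {α : Type*} [DecidableEq α] (S : Finset α) :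
    rho (∑ π ∈ partitionsOf S, (cbar π : Polynomial ℝ) * ∏ P ∈ π, Epoly P.card) =
      Polynomial.X ^ #S := by
  let W : (Polynomial ℝ)⟦X⟧ :=
    monomial 1 Polynomial.X + PowerSeries.map Polynomial.C zetaLogSeries
  have hW : constantCoeff W = 0 := by
    rw [map_add, constantCoeff_monomial_of_ne_zero one_ne_zero,
      constantCoeff_map_eq_zero _ constantCoeff_zetaLogSeries, add_zero]
  have hblocks : ∀ π ∈ partitionsOf S, (cbar π : Polynomial ℝ) * ∏ P ∈ π, Epoly #P =
      ∏ P ∈ π, ((#P).factorial : Polynomial ℝ) * coeff #P W := fun π hπ => by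
    rw [cbar, Nat.cast_prod, ← prod_mul_distrib]
    exact prod_congr rfl fun P hP =>
      factorial_pred_mul_Epoly ((mem_partitionsOf.mp hπ).1 P hP).card_ne_zero
  rw [sum_congr rfl hblocks, sum_partitionsOf_prod_eq_coeff_exp_subst hW, ← rhoLinear_apply]
  exact apply_factorial_mul_coeff_exp_subst_eq_X_pow rhoLinear constantCoeff_zetaLogSeries
    (fun n => by rw [rhoLinear_X_pow, rhoX_eq_factorial_mul_coeff]) #S

end Rho

/-- `ρ̄( Σ_{Π ∈ P(r)} c̄(Π) ∏_{P ∈ Π} E(|P|;T) ) = T^r` for every positive integer `r`;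
i.e. the partition sum equals `ρ̄⁻¹(T^r)`. -/
theorem rho_partition_sum (r : ℕ) (hr : 1 ≤ r) :
    rho (∑ π ∈ partitionsOf (Finset.univ : Finset (Fin r)),
        (cbar π : Polynomial ℝ) * ∏ P ∈ π, Epoly P.card) =
      Polynomial.X ^ r := by
  simpa using rho_partition_sum_general (Finset.univ : Finset (Fin r))
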